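/- Let (E,d) be a metric space, T > 0, δ ∈ (0,1) and p ∈ (1,∞) with δ > 1/p. Then the three seminorms ‖·‖_{V^{δ,p}}, ‖·‖_{\tilde V^{δ,p}}, and ‖·‖_{\hat N^{δ,p}} are equivalent on C([0,T];E): there exist constants c, C > 0 depending only on δ, p, T such that c‖f‖_{V^{δ,p}} ≤ ‖f‖_{\tilde V^{δ,p}} ≤ C‖f‖_{\hat N^{δ,p}} ≤ C'‖f‖_{V^{δ,p}} for all continuous f : [0,T] → E. Consequently V^{δ,p}([0,T];E) = \tilde V^{δ,p}([0,T];E) = \hat N^{δ,p}([0,T];E). -/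

import Mathlib

/-!
The `p`-th powers of the three seminorms are all suprema, over partitions, of sums of an interval
functional. Such suprema are superadditive in the interval (`partSup_le_add`), so an inequality
between two of them on `[0,T]` follows from a bound for the first functional on a single interval
by the second supremum on that interval (`partSup_le_mul`).

* An increment is at most the `1/δ`-variation (`edist_le_qVar`), so `VNorm ≤ tildeVNorm`.
* `nikNorm_rpow_le`: the integral defining the Nikolskii seminorm with shift `h` is an integral over
  `r ∈ (0,h]` of the sum of `d(f_x, f_{x+h})^p` over `x ∈ s + r + hℕ`. Each such sum is at most
  `h ^ (δp - 1) ‖f‖_V^p`, whence `nikHatNorm ≤ VNorm`.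
* `edist_le_nikNorm`: since `γ = δ - 1/p > 0`, every increment satisfies
  `d(f_s, f_t) ≤ C (t - s)^γ ‖f‖_{N;[s,t]}`. The average of `d(f_r, f_s)` over an interval starting
  at `s` is compared with the average over its left half; the two halves are translates of each
  other, so the difference is controlled by the Nikolskii seminorm with a single shift, and the
  errors over the dyadic scales form a convergent geometric series. The same is done at `t`.
  Hölder's inequality for sums turns this increment bound into a bound of the `1/δ`-variation
  (`qVar_rpow_div_le`), whence `tildeVNorm ≤ C nikHatNorm`.
-/


open scoped ENNReal NNReal
open MeasureTheory

/-- `u 0, u 1, ..., u n` are the points of a partition of `[s,t]`. -/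
def IsPart (s t : ℝ) (n : ℕ) (u : ℕ → ℝ) : Prop :=
  u 0 = s ∧ u n = t ∧ ∀ i < n, u i < u (i + 1)

/-- Riesz-type sum of `f` along a partition, with parameters `δ, p`. -/
noncomputable def rieszSum {E : Type*} [PseudoEMetricSpace E] (f : ℝ → E) (δ p : ℝ)
    (n : ℕ) (u : ℕ → ℝ) : ℝ≥0∞ :=
  ∑ i ∈ Finset.range n,
    edist (f (u i)) (f (u (i + 1))) ^ p / ENNReal.ofReal (u (i + 1) - u i) ^ (δ * p - 1)

/-- Riesz type variation seminorm `‖f‖_{V^{δ,p};[s,t]}`. -/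
noncomputable def VNorm {E : Type*} [PseudoEMetricSpace E] (f : ℝ → E) (δ p : ℝ)
    (s t : ℝ) : ℝ≥0∞ :=
  (⨆ n, ⨆ u, ⨆ _ : IsPart s t n u, rieszSum f δ p n u) ^ (1 / p)

/-- `q`-variation seminorm `‖f‖_{q-var;[s,t]}`. -/
noncomputable def qVar {E : Type*} [PseudoEMetricSpace E] (f : ℝ → E) (q : ℝ)
    (s t : ℝ) : ℝ≥0∞ :=
  (⨆ n, ⨆ u, ⨆ _ : IsPart s t n u,
    ∑ i ∈ Finset.range n, edist (f (u i)) (f (u (i + 1))) ^ q) ^ (1 / q)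

/-- `δ`-Hölder seminorm on `[s,t]`, i.e. `‖f‖_{V^{δ,∞};[s,t]}`. -/
noncomputable def holNorm {E : Type*} [PseudoEMetricSpace E] (f : ℝ → E) (δ : ℝ)
    (s t : ℝ) : ℝ≥0∞ :=
  ⨆ u, ⨆ v, ⨆ _ : s ≤ u ∧ u < v ∧ v ≤ t,
    edist (f u) (f v) / ENNReal.ofReal (v - u) ^ δ

/-- Nikolskii seminorm `‖f‖_{N^{δ,p};[s,t]}`. -/
noncomputable def nikNorm {E : Type*} [PseudoEMetricSpace E] (f : ℝ → E) (δ p : ℝ)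
    (s t : ℝ) : ℝ≥0∞ :=
  ⨆ h : ℝ, ⨆ _ : 0 < h ∧ h ≤ t - s,
    ENNReal.ofReal h ^ (-δ) *
      (∫⁻ r in Set.Ioc s (t - h), edist (f r) (f (r + h)) ^ p) ^ (1 / p)

/-- Refined Nikolskii seminorm `‖f‖_{\hat N^{δ,p};[s,t]}`. -/
noncomputable def nikHatNorm {E : Type*} [PseudoEMetricSpace E] (f : ℝ → E) (δ p : ℝ)
    (s t : ℝ) : ℝ≥0∞ :=
  (⨆ n, ⨆ u, ⨆ _ : IsPart s t n u,
    ∑ i ∈ Finset.range n, nikNorm f δ p (u i) (u (i + 1)) ^ p) ^ (1 / p)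

/-- Mixed Hölder-variation seminorm `‖f‖_{\tilde V^{δ,p};[s,t]}`. -/
noncomputable def tildeVNorm {E : Type*} [PseudoEMetricSpace E] (f : ℝ → E) (δ p : ℝ)
    (s t : ℝ) : ℝ≥0∞ :=
  (⨆ n, ⨆ u, ⨆ _ : IsPart s t n u,
    ∑ i ∈ Finset.range n,
      qVar f (1 / δ) (u i) (u (i + 1)) ^ p
        / ENNReal.ofReal (u (i + 1) - u i) ^ (δ * p - 1)) ^ (1 / p)

/-- Fractional Sobolev (Sobolev–Slobodeckij) seminorm `‖f‖_{W^{δ,p};[s,t]}`. -/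
noncomputable def sobNorm {E : Type*} [PseudoEMetricSpace E] (f : ℝ → E) (δ p : ℝ)
    (s t : ℝ) : ℝ≥0∞ :=
  (∫⁻ v in Set.Ioc s t, ∫⁻ u in Set.Ioc s t,
    edist (f u) (f v) ^ p / ENNReal.ofReal |v - u| ^ (1 + δ * p)) ^ (1 / p)

/-! ### Suprema over partitions and superadditivity -/

/-- Supremum over the partitions of `[s,t]` of the sums of an interval functional `φ`. -/
noncomputable def partSup (φ : ℝ → ℝ → ℝ≥0∞) (s t : ℝ) : ℝ≥0∞ :=
  ⨆ n, ⨆ u, ⨆ _ : IsPart s t n u, ∑ i ∈ Finset.range n, φ (u i) (u (i + 1))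

theorem sum_le_partSup {φ : ℝ → ℝ → ℝ≥0∞} {s t : ℝ} {n : ℕ} {u : ℕ → ℝ} (h : IsPart s t n u) :
    ∑ i ∈ Finset.range n, φ (u i) (u (i + 1)) ≤ partSup φ s t :=
  le_iSup_of_le n (le_iSup_of_le u (le_iSup_of_le h le_rfl))

theorem partSup_le {φ : ℝ → ℝ → ℝ≥0∞} {s t : ℝ} {M : ℝ≥0∞}
    (h : ∀ n u, IsPart s t n u → ∑ i ∈ Finset.range n, φ (u i) (u (i + 1)) ≤ M) :
    partSup φ s t ≤ M :=
  iSup_le fun n => iSup_le fun u => iSup_le fun hu => h n u hu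

theorem le_partSup {φ : ℝ → ℝ → ℝ≥0∞} {s t : ℝ} (h : s < t) : φ s t ≤ partSup φ s t := by
  have hu : IsPart s t 1 (fun i => if i = 0 then s else t) := by
    refine ⟨by simp, by simp, ?_⟩
    intro i hi
    obtain rfl : i = 0 := by omega
    simpa using h
  simpa using sum_le_partSup (φ := φ) hu

theorem exists_isPart {s t : ℝ} (h : s ≤ t) : ∃ n u, IsPart s t n u := by
  rcases h.eq_or_lt with rfl | h
  · exact ⟨0, fun _ => s, rfl, rfl, by simp⟩
  · refine ⟨1, fun i => if i = 0 then s else t, by simp, by simp, ?_⟩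
    intro i hi
    obtain rfl : i = 0 := by omega
    simpa using h

/-- Interval functionals of the form `partSup φ` are superadditive. -/
theorem partSup_le_add {φ : ℝ → ℝ → ℝ≥0∞} {s m t : ℝ} (h₁ : s ≤ m) (h₂ : m ≤ t) :
    partSup φ s m + partSup φ m t ≤ partSup φ s t := by
  -- concatenation of a partition of `[s,m]` with one of `[m,t]`
  have key : ∀ n u, IsPart s m n u → ∀ k v, IsPart m t k v →
      (∑ i ∈ Finset.range n, φ (u i) (u (i + 1))) + ∑ i ∈ Finset.range k, φ (v i) (v (i + 1))
        ≤ partSup φ s t := by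
    intro n u hu k v hv
    obtain ⟨hu0, hun, hul⟩ := hu
    obtain ⟨hv0, hvk, hvl⟩ := hv
    set w : ℕ → ℝ := fun i => if i < n then u i else v (i - n) with hw
    have hw1 : ∀ i ≤ n, w i = u i := by
      intro i hi
      rcases hi.eq_or_lt with rfl | hi
      · simp [hw, hv0, hun]
      · simp [hw, hi]
    have hw2 : ∀ i, w (n + i) = v i := by
      intro i
      simp [hw]
    have hpart : IsPart s t (n + k) w := by
      refine ⟨by rw [hw1 0 (Nat.zero_le _), hu0], by rw [hw2, hvk], ?_⟩
      intro i hi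
      rcases lt_or_ge i n with hin | hin
      · rw [hw1 i hin.le, hw1 (i + 1) hin]
        exact hul i hin
      · obtain ⟨j, rfl⟩ := Nat.exists_eq_add_of_le hin
        rw [hw2, add_assoc, hw2]
        exact hvl j (by omega)
    have := sum_le_partSup (φ := φ) hpart
    rw [Finset.sum_range_add] at this
    refine le_trans (le_of_eq ?_) this
    congr 1
    · refine Finset.sum_congr rfl fun i hi => ?_
      have hi := Finset.mem_range.1 hi
      rw [hw1 i hi.le, hw1 (i + 1) hi]
    · refine Finset.sum_congr rfl fun i hi => ?_
      rw [hw2, add_assoc, hw2]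
  have h3 : ∀ n u, IsPart s m n u →
      (∑ i ∈ Finset.range n, φ (u i) (u (i + 1))) + partSup φ m t ≤ partSup φ s t := by
    intro n u hu
    obtain ⟨k, v, hv⟩ := exists_isPart h₂
    rcases eq_or_ne (∑ i ∈ Finset.range n, φ (u i) (u (i + 1))) ⊤ with htop | htop
    · have := key n u hu k v hv
      rw [htop, top_add] at this ⊢
      exact this
    · have hle : partSup φ m t ≤ partSup φ s t - ∑ i ∈ Finset.range n, φ (u i) (u (i + 1)) :=
        partSup_le fun k v hv => ENNReal.le_sub_of_add_le_left htop (key n u hu k v hv)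
      have h0 : (∑ i ∈ Finset.range n, φ (u i) (u (i + 1))) ≤ partSup φ s t :=
        le_self_add.trans (key n u hu k v hv)
      calc _ ≤ (∑ i ∈ Finset.range n, φ (u i) (u (i + 1))) +
            (partSup φ s t - ∑ i ∈ Finset.range n, φ (u i) (u (i + 1))) := by gcongr
        _ = _ := add_tsub_cancel_of_le h0
  obtain ⟨n, u, hu⟩ := exists_isPart h₁
  rcases eq_or_ne (partSup φ m t) ⊤ with htop | htop
  · have := h3 n u hu
    rw [htop, add_top] at this ⊢
    exact this
  · have hle : partSup φ s m ≤ partSup φ s t - partSup φ m t :=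
      partSup_le fun n u hu => ENNReal.le_sub_of_add_le_right htop (h3 n u hu)
    calc _ ≤ (partSup φ s t - partSup φ m t) + partSup φ m t := by gcongr
      _ = _ := tsub_add_cancel_of_le (le_add_self.trans (h3 n u hu))

theorem IsPart.le {s t : ℝ} {n : ℕ} {u : ℕ → ℝ} (h : IsPart s t n u) {i j : ℕ} (hij : i ≤ j)
    (hj : j ≤ n) : u i ≤ u j := by
  induction j, hij using Nat.le_induction with
  | base => exact le_rfl
  | succ k hk ih => exact (ih (by omega)).trans (h.2.2 k (by omega)).le

theorem IsPart.sub_mem {s t : ℝ} {n : ℕ} {u : ℕ → ℝ} (h : IsPart s t n u) {i : ℕ} (hi : i < n) :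
    s ≤ u i ∧ u (i + 1) ≤ t :=
  ⟨h.1 ▸ h.le (Nat.zero_le i) hi.le, h.2.1 ▸ h.le (j := n) hi le_rfl⟩

/-- Superadditivity of `partSup φ` along a whole partition. -/
theorem sum_partSup_le {φ : ℝ → ℝ → ℝ≥0∞} {s t : ℝ} {n : ℕ} {u : ℕ → ℝ} (h : IsPart s t n u) :
    ∑ i ∈ Finset.range n, partSup φ (u i) (u (i + 1)) ≤ partSup φ s t := by
  have key : ∀ k ≤ n, ∑ i ∈ Finset.range k, partSup φ (u i) (u (i + 1)) ≤ partSup φ (u 0) (u k) := by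
    intro k hk
    induction k with
    | zero => simp
    | succ k ih =>
      rw [Finset.sum_range_succ]
      exact (add_le_add_left (ih (by omega)) _).trans
        (partSup_le_add (h.le (Nat.zero_le k) (by omega)) (h.2.2 k hk).le)
  have := key n le_rfl
  rwa [h.1, h.2.1] at this

/-- If a functional `φ` is dominated on subintervals of `[s,t]` by the superadditive functional
`K • partSup ψ`, then so is `partSup φ` on `[s,t]`. -/
theorem partSup_le_mul {φ ψ : ℝ → ℝ → ℝ≥0∞} {s t : ℝ} {K : ℝ≥0∞}
    (h : ∀ a b, s ≤ a → a < b → b ≤ t → φ a b ≤ K * partSup ψ a b) :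
    partSup φ s t ≤ K * partSup ψ s t := by
  refine partSup_le fun n u hu => ?_
  calc _ ≤ ∑ i ∈ Finset.range n, K * partSup ψ (u i) (u (i + 1)) := by
        refine Finset.sum_le_sum fun i hi => ?_
        have hi := Finset.mem_range.1 hi
        exact h _ _ (hu.sub_mem hi).1 (hu.2.2 i hi) (hu.sub_mem hi).2
    _ = K * ∑ i ∈ Finset.range n, partSup ψ (u i) (u (i + 1)) := by rw [Finset.mul_sum]
    _ ≤ _ := by gcongr; exact sum_partSup_le hu

/-! ### The Riesz variation controls the refined Nikolskii seminorm -/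

/-- The interval functional whose partition sums define `VNorm`. -/
noncomputable def rieszTerm {E : Type*} [PseudoEMetricSpace E] (f : ℝ → E) (δ p a b : ℝ) : ℝ≥0∞ :=
  edist (f a) (f b) ^ p / ENNReal.ofReal (b - a) ^ (δ * p - 1)

/-- The increments of length `h` along an arithmetic progression inside `[x,t]` are part of a
partition of `[x,t]`. The indicator discards the terms that leave `[x,t]`. -/
theorem sum_indicator_le {E : Type*} [PseudoEMetricSpace E] (f : ℝ → E) {δ p h t : ℝ}
    (hh : 0 < h) (n : ℕ) : ∀ x ≤ t,
    ∑ k ∈ Finset.range n, (Set.Iic (t - h)).indicator (fun r => edist (f r) (f (r + h)) ^ p)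
      (x + k * h) ≤ ENNReal.ofReal h ^ (δ * p - 1) * partSup (rieszTerm f δ p) x t := by
  induction n with
  | zero => simp
  | succ n ih =>
    intro x hx
    rw [Finset.sum_range_succ']
    rcases le_or_gt x (t - h) with hxt | hxt
    · have h1 := ih (x + h) (by linarith)
      have h2 : edist (f x) (f (x + h)) ^ p ≤
          ENNReal.ofReal h ^ (δ * p - 1) * partSup (rieszTerm f δ p) x (x + h) := by
        have := le_partSup (φ := rieszTerm f δ p) (show x < x + h by linarith)
        rw [rieszTerm, add_sub_cancel_left] at this
        rw [mul_comm]
        refine (ENNReal.div_le_iff ?_ ?_).1 this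
        · exact (ENNReal.rpow_pos (by simpa using hh) ENNReal.ofReal_ne_top).ne'
        · exact ENNReal.rpow_ne_top_of_ne_zero (by simpa using hh) ENNReal.ofReal_ne_top
      have h3 := partSup_le_add (φ := rieszTerm f δ p) (show x ≤ x + h by linarith)
        (show x + h ≤ t by linarith)
      have e : ∀ k : ℕ, x + ((k + 1 : ℕ) : ℝ) * h = x + h + k * h := by
        intro k; push_cast; ring
      simp only [e]
      have e0 : (Set.Iic (t - h)).indicator (fun r => edist (f r) (f (r + h)) ^ p)
          (x + ((0 : ℕ) : ℝ) * h) = edist (f x) (f (x + h)) ^ p := by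
        simp [hxt]
      rw [e0]
      refine (add_le_add h1 h2).trans ?_
      rw [← mul_add, add_comm (partSup _ (x + h) t)]
      gcongr
    · have e : ∀ k : ℕ, (Set.Iic (t - h)).indicator (fun r => edist (f r) (f (r + h)) ^ p)
          (x + k * h) = 0 := by
        intro k
        refine Set.indicator_of_notMem ?_ _
        have : 0 ≤ (k : ℝ) * h := by positivity
        simp only [Set.mem_Iic, not_le]
        linarith
      simp only [e]
      simp

theorem lintegral_Ioc_add (g : ℝ → ℝ≥0∞) (a b c : ℝ) :
    ∫⁻ r in Set.Ioc (a + c) (b + c), g r = ∫⁻ r in Set.Ioc a b, g (r + c) := by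
  have h := (measurePreserving_add_right (volume : Measure ℝ) c).setLIntegral_comp_emb
    (MeasurableEquiv.addRight c).measurableEmbedding g (Set.Ioc a b)
  rw [h]
  simp

theorem lintegral_Ioc_le_sum (g : ℝ → ℝ≥0∞) (s h : ℝ) (n : ℕ) :
    ∫⁻ r in Set.Ioc s (s + n * h), g r ≤
      ∫⁻ r in Set.Ioc 0 h, ∑ k ∈ Finset.range n, g (s + r + k * h) := by
  induction n with
  | zero => simp
  | succ n ih =>
    have hsub : Set.Ioc s (s + ((n + 1 : ℕ) : ℝ) * h) ⊆
        Set.Ioc s (s + n * h) ∪ Set.Ioc (0 + (s + n * h)) (h + (s + n * h)) := by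
      intro r hr
      rcases le_or_gt r (s + n * h) with h1 | h1
      · exact Or.inl ⟨hr.1, h1⟩
      · refine Or.inr ⟨by linarith, ?_⟩
        have := hr.2
        push_cast at this
        linarith
    simp only [Finset.sum_range_succ]
    calc _ ≤ ∫⁻ r in Set.Ioc s (s + n * h) ∪ Set.Ioc (0 + (s + n * h)) (h + (s + n * h)), g r :=
          lintegral_mono_set hsub
      _ ≤ _ := lintegral_union_le _ _ _
      _ ≤ (∫⁻ r in Set.Ioc 0 h, ∑ k ∈ Finset.range n, g (s + r + k * h)) +
          ∫⁻ r in Set.Ioc 0 h, g (s + r + n * h) := by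
          rw [lintegral_Ioc_add]
          refine add_le_add ih (le_of_eq ?_)
          congr 1; ext r; congr 1; ring
      _ ≤ _ := le_lintegral_add _ _

/-- The integral of `d(f_r, f_{r+h})^p` over `r` is cut into windows of length `h` and translated to
`(0,h]`; for each fixed `r` the integrands then add up to a Riesz sum with mesh `h`, which is at
most `h ^ (δ * p - 1)` times the Riesz variation. The powers of `h` cancel. -/
theorem nikNorm_rpow_le {E : Type*} [PseudoEMetricSpace E] (f : ℝ → E) {δ p s t : ℝ}
    (hp : 1 < p) :
    nikNorm f δ p s t ^ p ≤ partSup (rieszTerm f δ p) s t := by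
  have hp0 : 0 < p := by linarith
  rw [← ENNReal.le_rpow_inv_iff hp0]
  refine iSup_le fun h => iSup_le fun ⟨hh, hht⟩ => ?_
  have hH0 : ENNReal.ofReal h ≠ 0 := by simpa using hh
  have hHt : ENNReal.ofReal h ≠ ⊤ := ENNReal.ofReal_ne_top
  set H := ENNReal.ofReal h with hH
  rw [ENNReal.le_rpow_inv_iff hp0, ENNReal.mul_rpow_of_nonneg _ _ hp0.le, ← ENNReal.rpow_mul,
    ← ENNReal.rpow_mul, one_div_mul_cancel hp0.ne', ENNReal.rpow_one]
  -- `n` windows of length `h` cover `(s, t - h]`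
  obtain ⟨n, hn⟩ := exists_nat_ge ((t - h - s) / h)
  have hn' : t - h ≤ s + n * h := by
    rw [div_le_iff₀ hh] at hn; linarith
  set G := (Set.Iic (t - h)).indicator (fun r => edist (f r) (f (r + h)) ^ p) with hG
  have hint : ∫⁻ r in Set.Ioc s (t - h), edist (f r) (f (r + h)) ^ p ≤
      H * (H ^ (δ * p - 1) * partSup (rieszTerm f δ p) s t) := by
    calc _ = ∫⁻ r in Set.Ioc s (t - h), G r := by
          refine setLIntegral_congr_fun measurableSet_Ioc fun r hr => ?_
          simp [hG, hr.2]
      _ ≤ ∫⁻ r in Set.Ioc s (s + n * h), G r :=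
          lintegral_mono_set (Set.Ioc_subset_Ioc_right hn')
      _ ≤ _ := lintegral_Ioc_le_sum _ _ _ _
      _ ≤ ∫⁻ r in Set.Ioc 0 h, H ^ (δ * p - 1) * partSup (rieszTerm f δ p) s t := by
          refine setLIntegral_mono' measurableSet_Ioc fun r hr => ?_
          refine (sum_indicator_le (δ := δ) f hh n (s + r) (by linarith [hr.2])).trans ?_
          gcongr
          exact le_add_self.trans
            (partSup_le_add (by linarith [hr.1] : s ≤ s + r) (by linarith [hr.2]))
      _ = _ := by
          rw [setLIntegral_const, Real.volume_Ioc, sub_zero, mul_comm]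
  calc _ ≤ H ^ (-δ * p) * (H * (H ^ (δ * p - 1) * partSup (rieszTerm f δ p) s t)) := by gcongr
    _ = H ^ (-δ * p + 1 + (δ * p - 1)) * partSup (rieszTerm f δ p) s t := by
        rw [ENNReal.rpow_add _ _ hH0 hHt, ENNReal.rpow_add _ _ hH0 hHt, ENNReal.rpow_one]
        ring
    _ = _ := by
        rw [show -δ * p + 1 + (δ * p - 1) = 0 by ring, ENNReal.rpow_zero, one_mul]

/-! ### Increments are controlled by the Nikolskii seminorm -/

/-- The `L¹` form of the Nikolskii bound for one shift `h` over a window of length `h`, obtained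
from Hölder's inequality. -/
theorem lintegral_shift_le {E : Type*} [PseudoEMetricSpace E] {f : ℝ → E} (hf : Continuous f)
    {δ p s t a h : ℝ} (hp : 1 < p) (hh : 0 < h) (hsa : s ≤ a) (hat : a + 2 * h ≤ t) :
    ∫⁻ r in Set.Ioc a (a + h), edist (f r) (f (r + h)) ≤
      ENNReal.ofReal h ^ (1 + (δ - 1 / p)) * nikNorm f δ p s t := by
  have hp0 : 0 < p := by linarith
  have hH0 : ENNReal.ofReal h ≠ 0 := by simpa using hh
  have hHt : ENNReal.ofReal h ≠ ⊤ := ENNReal.ofReal_ne_top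
  have hN : ENNReal.ofReal h ^ (-δ) *
      (∫⁻ r in Set.Ioc s (t - h), edist (f r) (f (r + h)) ^ p) ^ (1 / p) ≤ nikNorm f δ p s t :=
    le_iSup_of_le h (le_iSup_of_le ⟨hh, by linarith⟩ le_rfl)
  set H := ENNReal.ofReal h with hH
  have hN' : (∫⁻ r in Set.Ioc s (t - h), edist (f r) (f (r + h)) ^ p) ^ (1 / p) ≤
      H ^ δ * nikNorm f δ p s t := by
    calc _ = H ^ δ * (H ^ (-δ) *
        (∫⁻ r in Set.Ioc s (t - h), edist (f r) (f (r + h)) ^ p) ^ (1 / p)) := by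
          rw [← mul_assoc, ← ENNReal.rpow_add _ _ hH0 hHt, add_neg_cancel, ENNReal.rpow_zero,
            one_mul]
      _ ≤ _ := by gcongr
  have hpq := Real.HolderConjugate.conjExponent hp
  have hm : Measurable fun r => edist (f r) (f (r + h)) :=
    (hf.edist (hf.comp (continuous_id.add continuous_const))).measurable
  have hol := ENNReal.lintegral_mul_le_Lp_mul_Lq (volume.restrict (Set.Ioc a (a + h))) hpq
    hm.aemeasurable (aemeasurable_const (b := (1 : ℝ≥0∞)))
  simp only [Pi.mul_apply, mul_one, ENNReal.one_rpow, lintegral_one,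
    Measure.restrict_apply_univ, Real.volume_Ioc, add_sub_cancel_left] at hol
  rw [← hH] at hol
  refine hol.trans ?_
  have e : 1 / p.conjExponent = 1 - 1 / p := by
    have := hpq.inv_add_inv_eq_one
    simp only [one_div]; linarith
  rw [e]
  calc _ ≤ (∫⁻ r in Set.Ioc s (t - h), edist (f r) (f (r + h)) ^ p) ^ (1 / p) * H ^ (1 - 1 / p) := by
        gcongr
        linarith
    _ ≤ H ^ δ * nikNorm f δ p s t * H ^ (1 - 1 / p) := by gcongr
    _ = _ := by
        rw [show 1 + (δ - 1 / p) = δ + (1 - 1 / p) by ring, ENNReal.rpow_add _ _ hH0 hHt]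
        ring

/-- The integral of `d(f_r, z)` over an interval is at most twice its integral over either half, up
to an error controlled by the Nikolskii seminorm: the two halves are translates of each other by
`h`, so the triangle inequality compares `d(f_r, z)` with `d(f_{r+h}, z)`. -/
theorem lintegral_halving {E : Type*} [PseudoEMetricSpace E] {f : ℝ → E} (hf : Continuous f)
    {δ p s t a h : ℝ} (hp : 1 < p) (hh : 0 < h) (hsa : s ≤ a) (hat : a + 2 * h ≤ t) (z : E) :
    ∫⁻ r in Set.Ioc a (a + 2 * h), edist (f r) z ≤
        2 * (∫⁻ r in Set.Ioc a (a + h), edist (f r) z) +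
          ENNReal.ofReal h ^ (1 + (δ - 1 / p)) * nikNorm f δ p s t ∧
    ∫⁻ r in Set.Ioc a (a + 2 * h), edist (f r) z ≤
        2 * (∫⁻ r in Set.Ioc (a + h) (a + 2 * h), edist (f r) z) +
          ENNReal.ofReal h ^ (1 + (δ - 1 / p)) * nikNorm f δ p s t := by
  have hshift := lintegral_shift_le (δ := δ) hf hp hh hsa hat
  set D := ENNReal.ofReal h ^ (1 + (δ - 1 / p)) * nikNorm f δ p s t
  have hm : Measurable fun r => edist (f r) (f (r + h)) :=
    (hf.edist (hf.comp (continuous_id.add continuous_const))).measurable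
  have hsplit : ∫⁻ r in Set.Ioc a (a + 2 * h), edist (f r) z ≤
      (∫⁻ r in Set.Ioc a (a + h), edist (f r) z) +
        ∫⁻ r in Set.Ioc (a + h) (a + 2 * h), edist (f r) z := by
    rw [← Set.Ioc_union_Ioc_eq_Ioc (show a ≤ a + h by linarith) (show a + h ≤ a + 2 * h by linarith)]
    exact lintegral_union_le _ _ _
  have hR : ∫⁻ r in Set.Ioc (a + h) (a + 2 * h), edist (f r) z =
      ∫⁻ r in Set.Ioc a (a + h), edist (f (r + h)) z := by
    rw [← lintegral_Ioc_add (fun r => edist (f r) z), show a + h + h = a + 2 * h by ring]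
  have h1 : ∫⁻ r in Set.Ioc (a + h) (a + 2 * h), edist (f r) z ≤
      D + ∫⁻ r in Set.Ioc a (a + h), edist (f r) z := by
    rw [hR]
    calc _ ≤ ∫⁻ r in Set.Ioc a (a + h), (edist (f r) (f (r + h)) + edist (f r) z) :=
          lintegral_mono fun r => edist_triangle_left _ _ _
      _ = _ := lintegral_add_left hm _
      _ ≤ _ := by gcongr
  have h2 : ∫⁻ r in Set.Ioc a (a + h), edist (f r) z ≤
      D + ∫⁻ r in Set.Ioc (a + h) (a + 2 * h), edist (f r) z := by
    rw [hR]
    calc _ ≤ ∫⁻ r in Set.Ioc a (a + h), (edist (f r) (f (r + h)) + edist (f (r + h)) z) :=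
          lintegral_mono fun r => edist_triangle _ _ _
      _ = _ := lintegral_add_left hm _
      _ ≤ _ := by gcongr
  constructor
  · refine hsplit.trans ((add_le_add_right h1 _).trans (le_of_eq ?_))
    ring
  · refine hsplit.trans ((add_le_add_left h2 _).trans (le_of_eq ?_))
    ring

/-- The quantities `2 ^ k * B k` tend to `0`, and each exceeds the next by at most the `k`-th term of
a geometric series of ratio `2 ^ (-γ)`; hence `B 0` is bounded by the sum of that series. -/
theorem dyadic_iterate {L γ : ℝ} (hL : 0 < L) (hγ : 0 < γ) {N : ℝ≥0∞} {B : ℕ → ℝ≥0∞}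
    (hstep : ∀ k, B k ≤ 2 * B (k + 1) + ENNReal.ofReal (L / 2 ^ (k + 1)) ^ (1 + γ) * N)
    (hlim : ∀ ε : ℝ≥0∞, 0 < ε → ∃ K, ∀ k ≥ K, B k ≤ ENNReal.ofReal (L / 2 ^ k) * ε) :
    B 0 ≤ (1 - (2 : ℝ≥0∞) ^ (-γ))⁻¹ * (ENNReal.ofReal L ^ (1 + γ) * N) := by
  set q : ℝ≥0∞ := (2 : ℝ≥0∞) ^ (-γ) with hq
  have hL0 : ENNReal.ofReal L ≠ 0 := by simpa using hL
  have hLt : ENNReal.ofReal L ≠ ⊤ := ENNReal.ofReal_ne_top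
  have hdiv : ∀ k : ℕ, ENNReal.ofReal (L / 2 ^ k) = ENNReal.ofReal L * (2 ^ k)⁻¹ := by
    intro k
    rw [ENNReal.ofReal_div_of_pos (by positivity), ENNReal.ofReal_pow (by norm_num),
      ENNReal.ofReal_ofNat, div_eq_mul_inv]
  have hcancel : ∀ k : ℕ, (2 : ℝ≥0∞) ^ k * (2 ^ k)⁻¹ = 1 := fun k =>
    ENNReal.mul_inv_cancel (by simp) (by simp)
  have hterm : ∀ k : ℕ, 2 ^ k * (ENNReal.ofReal (L / 2 ^ (k + 1)) ^ (1 + γ) * N) ≤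
      q ^ k * (ENNReal.ofReal L ^ (1 + γ) * N) := by
    intro k
    have hle : ENNReal.ofReal (L / 2 ^ (k + 1)) ≤ ENNReal.ofReal (L / 2 ^ k) := by
      refine ENNReal.ofReal_le_ofReal (div_le_div_of_nonneg_left hL.le (by positivity) ?_)
      exact pow_le_pow_right₀ (by norm_num) (Nat.le_succ k)
    calc _ ≤ 2 ^ k * (ENNReal.ofReal (L / 2 ^ k) ^ (1 + γ) * N) := by gcongr
      _ = (2 ^ k * (2 ^ k)⁻¹) * ((((2 : ℝ≥0∞) ^ k)⁻¹) ^ γ * (ENNReal.ofReal L ^ (1 + γ) * N)) := by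
          rw [hdiv, ENNReal.mul_rpow_of_nonneg _ _ (by linarith),
            ENNReal.rpow_add (x := ((2 : ℝ≥0∞) ^ k)⁻¹) _ _ (by simp) (by simp), ENNReal.rpow_one]
          ring
      _ = _ := by
          rw [hcancel, one_mul, hq, ← ENNReal.rpow_natCast, ← ENNReal.rpow_natCast,
            ← ENNReal.rpow_neg, ← ENNReal.rpow_mul, ← ENNReal.rpow_mul]
          congr 2; ring
  have hsum : ∀ k, B 0 ≤ 2 ^ k * B k +
      (∑ i ∈ Finset.range k, q ^ i) * (ENNReal.ofReal L ^ (1 + γ) * N) := by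
    intro k
    induction k with
    | zero => simp
    | succ k ih =>
      refine ih.trans ?_
      rw [Finset.sum_range_succ, add_mul]
      calc _ ≤ 2 ^ k * (2 * B (k + 1) + ENNReal.ofReal (L / 2 ^ (k + 1)) ^ (1 + γ) * N) +
            (∑ i ∈ Finset.range k, q ^ i) * (ENNReal.ofReal L ^ (1 + γ) * N) := by
            gcongr; exact hstep k
        _ = 2 ^ (k + 1) * B (k + 1) + ((∑ i ∈ Finset.range k, q ^ i) *
            (ENNReal.ofReal L ^ (1 + γ) * N) +
            2 ^ k * (ENNReal.ofReal (L / 2 ^ (k + 1)) ^ (1 + γ) * N)) := by ring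
        _ ≤ _ := add_le_add le_rfl (add_le_add le_rfl (hterm k))
  have hgeo : ∀ k, (∑ i ∈ Finset.range k, q ^ i) ≤ (1 - q)⁻¹ := fun k =>
    (ENNReal.sum_le_tsum _).trans (ENNReal.tsum_geometric q).le
  refine ENNReal.le_of_forall_pos_le_add fun ε hε _ => ?_
  obtain ⟨K, hK⟩ := hlim (ε / ENNReal.ofReal L) (ENNReal.div_pos (by simpa using hε.ne') hLt)
  refine (hsum K).trans ?_
  rw [add_comm]
  refine add_le_add (by gcongr; exact hgeo K) ?_
  calc _ ≤ 2 ^ K * (ENNReal.ofReal (L / 2 ^ K) * (ε / ENNReal.ofReal L)) := by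
        gcongr; exact hK K le_rfl
    _ = (2 ^ K * (2 ^ K)⁻¹) * (ENNReal.ofReal L * (ε / ENNReal.ofReal L)) := by rw [hdiv]; ring
    _ = ε := by rw [hcancel, one_mul, ENNReal.mul_div_cancel hL0 hLt]

/-- By continuity of `f` at `z`, the averages of `d(f_r, f_z)` over intervals shrinking to `z`
tend to `0`. -/
theorem lintegral_small {E : Type*} [PseudoEMetricSpace E] {f : ℝ → E} (hf : Continuous f)
    {L : ℝ} (z : ℝ) (a : ℕ → ℝ) (ha : ∀ k, |a k - z| ≤ L / 2 ^ k) (hL : 0 < L)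
    (ε : ℝ≥0∞) (hε : 0 < ε) :
    ∃ K, ∀ k ≥ K, ∫⁻ r in Set.Ioc (a k) (a k + L / 2 ^ k), edist (f r) (f z) ≤
      ENNReal.ofReal (L / 2 ^ k) * ε := by
  have hc : Filter.Tendsto (fun r => edist (f r) (f z)) (nhds z) (nhds 0) := by
    have := (hf.edist (continuous_const (y := f z))).tendsto z
    simpa using this
  obtain ⟨η, hη, hηε⟩ := Metric.eventually_nhds_iff.1 (hc.eventually (ge_mem_nhds hε))
  have hlim : Filter.Tendsto (fun k : ℕ => 2 * L * (1 / 2 : ℝ) ^ k) Filter.atTop (nhds (2 * L * 0)) :=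
    (tendsto_pow_atTop_nhds_zero_of_lt_one (by norm_num) (by norm_num)).const_mul _
  rw [mul_zero] at hlim
  obtain ⟨K, hK⟩ := Filter.eventually_atTop.1 (hlim.eventually (gt_mem_nhds hη))
  refine ⟨K, fun k hk => ?_⟩
  have hk := hK k hk
  rw [one_div, inv_pow, ← div_eq_mul_inv, mul_div_assoc] at hk
  calc _ ≤ ∫⁻ r in Set.Ioc (a k) (a k + L / 2 ^ k), ε := by
        refine setLIntegral_mono' measurableSet_Ioc fun r hr => hηε ?_
        have h1 := abs_le.1 (ha k)
        have h2 : 0 < L / 2 ^ k := by positivity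
        rw [Real.dist_eq, abs_lt]
        constructor <;> linarith [hr.1, hr.2, h1.1, h1.2]
    _ = _ := by rw [setLIntegral_const, Real.volume_Ioc, add_sub_cancel_left, mul_comm]

/-- The constant in the embedding of the Nikolskii space into Hölder functions: twice the sum of
the geometric series of ratio `2 ^ (-γ)`. -/
noncomputable def embConst (γ : ℝ) : ℝ≥0∞ := 2 * (1 - (2 : ℝ≥0∞) ^ (-γ))⁻¹

theorem embConst_ne_zero {γ : ℝ} : embConst γ ≠ 0 := by
  simp only [embConst, ne_eq, mul_eq_zero, not_or]
  refine ⟨by norm_num, ENNReal.inv_ne_zero.2 (ne_top_of_le_ne_top ENNReal.one_ne_top tsub_le_self)⟩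

theorem embConst_ne_top {γ : ℝ} (hγ : 0 < γ) : embConst γ ≠ ⊤ := by
  have : (2 : ℝ≥0∞) ^ (-γ) < 1 := ENNReal.rpow_lt_one_of_one_lt_of_neg (by norm_num) (by linarith)
  exact ENNReal.mul_ne_top (by norm_num) (ENNReal.inv_ne_top.2 (tsub_pos_of_lt this).ne')

/-- The embedding of the Nikolskii space into `(δ - 1 / p)`-Hölder functions, on one interval.
The distance `d(f_s, f_t)` is bounded by `d(f_r, f_s) + d(f_r, f_t)` averaged over `r`, and each of
the two averages is estimated along dyadic intervals shrinking to the end point. -/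
theorem edist_le_nikNorm_of_continuous {E : Type*} [PseudoEMetricSpace E] {f : ℝ → E}
    (hf : Continuous f) {δ p s t : ℝ} (hp : 1 < p) (hδp : 1 / p < δ) (hst : s < t) :
    edist (f s) (f t) ≤
      embConst (δ - 1 / p) * (ENNReal.ofReal (t - s) ^ (δ - 1 / p) * nikNorm f δ p s t) := by
  set γ := δ - 1 / p with hγdef
  have hγ : 0 < γ := by linarith
  set N := nikNorm f δ p s t
  obtain ⟨L, rfl⟩ : ∃ L, t = s + L := ⟨t - s, by ring⟩
  rw [add_sub_cancel_left]
  have hL : 0 < L := by linarith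
  have hpos : ∀ k : ℕ, 0 < L / 2 ^ k := fun k => by positivity
  have hle : ∀ k : ℕ, L / 2 ^ k ≤ L := fun k =>
    div_le_self hL.le (one_le_pow₀ (by norm_num))
  have hhalf : ∀ k : ℕ, 2 * (L / 2 ^ (k + 1)) = L / 2 ^ k := fun k => by
    rw [pow_succ]; field_simp
  -- intervals `(s, s + L / 2 ^ k]`, shrinking to the left end point
  have hleft : ∫⁻ r in Set.Ioc s (s + L), edist (f r) (f s) ≤
      (1 - (2 : ℝ≥0∞) ^ (-γ))⁻¹ * (ENNReal.ofReal L ^ (1 + γ) * N) := by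
    have := dyadic_iterate (N := N) (B := fun k => ∫⁻ r in Set.Ioc s (s + L / 2 ^ k),
      edist (f r) (f s)) hL hγ (fun k => ?_) (fun ε hε => ?_)
    · simpa using this
    · have := (lintegral_halving (δ := δ) (s := s) (t := s + L) (a := s) hf hp (hpos (k + 1)) le_rfl
        (by rw [hhalf]; linarith [hle k]) (f s)).1
      rwa [hhalf] at this
    · exact lintegral_small hf s (fun _ => s) (fun k => by simpa using (hpos k).le) hL ε hε
  -- intervals `(s + L - L / 2 ^ k, s + L]`, shrinking to the right end point
  have hright : ∫⁻ r in Set.Ioc s (s + L), edist (f r) (f (s + L)) ≤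
      (1 - (2 : ℝ≥0∞) ^ (-γ))⁻¹ * (ENNReal.ofReal L ^ (1 + γ) * N) := by
    have := dyadic_iterate (N := N) (B := fun k => ∫⁻ r in
      Set.Ioc (s + L - L / 2 ^ k) (s + L - L / 2 ^ k + L / 2 ^ k),
      edist (f r) (f (s + L))) hL hγ (fun k => ?_) (fun ε hε => ?_)
    · simpa using this
    · have := (lintegral_halving (δ := δ) (s := s) (t := s + L) (a := s + L - L / 2 ^ k) hf hp
        (hpos (k + 1)) (by linarith [hle k]) (by rw [hhalf]; linarith) (f (s + L))).2
      rw [hhalf, show s + L - L / 2 ^ k + L / 2 ^ (k + 1) = s + L - L / 2 ^ (k + 1) by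
        linarith [hhalf k]] at this
      simp only [sub_add_cancel] at this ⊢
      exact this
    · refine lintegral_small hf (s + L) (fun k => s + L - L / 2 ^ k) (fun k => ?_) hL ε hε
      rw [sub_sub_cancel_left, abs_neg, abs_of_pos (hpos k)]
  have hL0 : ENNReal.ofReal L ≠ 0 := by simpa using hL
  have hLt : ENNReal.ofReal L ≠ ⊤ := ENNReal.ofReal_ne_top
  have hm : Measurable fun r => edist (f r) (f s) := (hf.edist continuous_const).measurable
  have htot : ENNReal.ofReal L * edist (f s) (f (s + L)) ≤
      ENNReal.ofReal L * (embConst γ * (ENNReal.ofReal L ^ γ * N)) := by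
    calc _ = ∫⁻ r in Set.Ioc s (s + L), edist (f s) (f (s + L)) := by
          rw [setLIntegral_const, Real.volume_Ioc, add_sub_cancel_left, mul_comm]
      _ ≤ ∫⁻ r in Set.Ioc s (s + L), (edist (f r) (f s) + edist (f r) (f (s + L))) :=
          lintegral_mono fun r => edist_triangle_left _ _ _
      _ = _ := lintegral_add_left hm _
      _ ≤ _ := add_le_add hleft hright
      _ = _ := by
          rw [ENNReal.rpow_add _ _ hL0 hLt, ENNReal.rpow_one, embConst]
          ring
  exact (ENNReal.mul_le_mul_iff_right hL0 hLt).1 htot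

/-- The same bound when continuity is only known on `[s,t]`: both sides depend only on the
restriction of `f` to `[s,t]`, which extends continuously by constants. -/
theorem edist_le_nikNorm {E : Type*} [PseudoEMetricSpace E] {f : ℝ → E} {δ p s t : ℝ}
    (hf : ContinuousOn f (Set.Icc s t)) (hp : 1 < p) (hδp : 1 / p < δ) (hst : s < t) :
    edist (f s) (f t) ≤
      embConst (δ - 1 / p) * (ENNReal.ofReal (t - s) ^ (δ - 1 / p) * nikNorm f δ p s t) := by
  set g : ℝ → E := Set.IccExtend hst.le ((Set.Icc s t).domRestrict f) with hg
  have hgc : Continuous g := (continuousOn_iff_continuous_domRestrict.1 hf).Icc_extend'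
  have hgf : ∀ x ∈ Set.Icc s t, g x = f x := fun x hx => by
    rw [hg, Set.IccExtend_of_mem _ _ hx]; rfl
  have hN : nikNorm g δ p s t = nikNorm f δ p s t := by
    refine iSup_congr fun h => iSup_congr fun ⟨hh, hht⟩ => ?_
    congr 2
    refine setLIntegral_congr_fun measurableSet_Ioc fun r hr => ?_
    rw [hgf r ⟨hr.1.le, by linarith [hr.2]⟩, hgf (r + h) ⟨by linarith [hr.1], by linarith [hr.2]⟩]
  have := edist_le_nikNorm_of_continuous hgc (δ := δ) hp hδp hst
  rwa [hN, hgf s ⟨le_rfl, hst.le⟩, hgf t ⟨hst.le, le_rfl⟩] at this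

/-! ### The refined Nikolskii seminorm controls the mixed Hölder-variation seminorm -/

/-- The increment bound along a partition of `[a,b]` is summed with Hölder's inequality for the
conjugate exponents `δ / (δ - 1 / p)` and `δ * p`: the first factor collects the lengths into
`b - a`, the second the Nikolskii seminorms into the refined one. -/
theorem qVar_rpow_div_le {E : Type*} [PseudoEMetricSpace E] {f : ℝ → E} {δ p a b : ℝ}
    (hf : ContinuousOn f (Set.Icc a b)) (hδ : 0 < δ) (hp : 1 < p) (hδp : 1 / p < δ) (hab : a < b) :
    qVar f (1 / δ) a b ^ p / ENNReal.ofReal (b - a) ^ (δ * p - 1) ≤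
      embConst (δ - 1 / p) ^ p * partSup (fun u v => nikNorm f δ p u v ^ p) a b := by
  have hp0 : 0 < p := by linarith
  set γ := δ - 1 / p with hγdef
  have hγ : 0 < γ := by linarith
  set K := embConst γ
  set M := partSup (fun u v => nikNorm f δ p u v ^ p) a b
  set L := ENNReal.ofReal (b - a) with hL
  have hL0 : L ≠ 0 := by simpa [hL] using hab
  have hLt : L ≠ ⊤ := ENNReal.ofReal_ne_top
  have hpq : Real.HolderConjugate (δ / γ) (δ * p) := by
    rw [Real.holderConjugate_iff]
    refine ⟨?_, ?_⟩
    · rw [lt_div_iff₀ hγ]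
      have : 0 < 1 / p := by positivity
      linarith
    · rw [inv_div, hγdef]
      field_simp
      ring
  have hsum : partSup (fun u v => edist (f u) (f v) ^ (1 / δ)) a b ≤
      K ^ (1 / δ) * (L ^ (γ / δ) * M ^ (1 / (δ * p))) := by
    refine partSup_le fun n u hu => ?_
    have hlen : ∑ i ∈ Finset.range n, ENNReal.ofReal (u (i + 1) - u i) = L := by
      rw [← ENNReal.ofReal_sum_of_nonneg, Finset.sum_range_sub, hu.1, hu.2.1]
      intro i hi
      linarith [hu.2.2 i (Finset.mem_range.1 hi)]
    calc _ ≤ ∑ i ∈ Finset.range n, K ^ (1 / δ) * (ENNReal.ofReal (u (i + 1) - u i) ^ (γ / δ) *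
          nikNorm f δ p (u i) (u (i + 1)) ^ (1 / δ)) := by
          refine Finset.sum_le_sum fun i hi => ?_
          have hi := Finset.mem_range.1 hi
          have h1 := hu.sub_mem hi
          have h2 := edist_le_nikNorm (δ := δ) (hf.mono (Set.Icc_subset_Icc h1.1 h1.2)) hp hδp
            (hu.2.2 i hi)
          have hδ' : (0 : ℝ) ≤ 1 / δ := by positivity
          refine (ENNReal.rpow_le_rpow h2 hδ').trans (le_of_eq ?_)
          rw [ENNReal.mul_rpow_of_nonneg _ _ hδ', ENNReal.mul_rpow_of_nonneg _ _ hδ',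
            ← ENNReal.rpow_mul, mul_one_div]
      _ = K ^ (1 / δ) * ∑ i ∈ Finset.range n, ENNReal.ofReal (u (i + 1) - u i) ^ (γ / δ) *
          nikNorm f δ p (u i) (u (i + 1)) ^ (1 / δ) := by rw [Finset.mul_sum]
      _ ≤ _ := by
          gcongr
          refine (ENNReal.inner_le_Lp_mul_Lq _ _ _ hpq).trans ?_
          simp only [← ENNReal.rpow_mul]
          have e1 : γ / δ * (δ / γ) = 1 := by field_simp
          have e2 : 1 / δ * (δ * p) = p := by field_simp
          simp only [e1, e2, ENNReal.rpow_one, one_div_div, hlen]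
          gcongr
          exact sum_le_partSup (φ := fun u v => nikNorm f δ p u v ^ p) hu
  have hq : qVar f (1 / δ) a b ≤ K * (L ^ γ * M ^ (1 / p)) := by
    have e : (1 : ℝ) / (1 / δ) = δ := one_div_one_div δ
    have : qVar f (1 / δ) a b = partSup (fun u v => edist (f u) (f v) ^ (1 / δ)) a b ^ δ := by
      rw [qVar, e]; rfl
    rw [this]
    refine (ENNReal.rpow_le_rpow hsum hδ.le).trans (le_of_eq ?_)
    rw [ENNReal.mul_rpow_of_nonneg _ _ hδ.le, ENNReal.mul_rpow_of_nonneg _ _ hδ.le,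
      ← ENNReal.rpow_mul, ← ENNReal.rpow_mul, ← ENNReal.rpow_mul, one_div_mul_cancel hδ.ne',
      div_mul_cancel₀ _ hδ.ne', ENNReal.rpow_one, show 1 / (δ * p) * δ = 1 / p by field_simp]
  refine ENNReal.div_le_of_le_mul ((ENNReal.rpow_le_rpow hq hp0.le).trans (le_of_eq ?_))
  rw [ENNReal.mul_rpow_of_nonneg _ _ hp0.le, ENNReal.mul_rpow_of_nonneg _ _ hp0.le,
    ← ENNReal.rpow_mul, ← ENNReal.rpow_mul, one_div_mul_cancel hp0.ne', ENNReal.rpow_one,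
    show γ * p = δ * p - 1 by rw [hγdef]; field_simp]
  ring

theorem edist_le_qVar {E : Type*} [PseudoEMetricSpace E] (f : ℝ → E) {q a b : ℝ} (hq : 0 < q)
    (hab : a < b) : edist (f a) (f b) ≤ qVar f q a b := by
  have := le_partSup (φ := fun u v => edist (f u) (f v) ^ q) hab
  calc _ = (edist (f a) (f b) ^ q) ^ (1 / q) := by
        rw [← ENNReal.rpow_mul, mul_one_div_cancel hq.ne', ENNReal.rpow_one]
    _ ≤ _ := ENNReal.rpow_le_rpow this (by positivity)

/-- equivalence of the seminorms `V^{δ,p}`, `\tilde V^{δ,p}` and `\hat N^{δ,p}`. -/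
theorem VNorm_tildeVNorm_nikHatNorm_equiv {E : Type*} [PseudoEMetricSpace E] (T δ p : ℝ)
    (hT : 0 < T) (hδ : 0 < δ) (hδ1 : δ < 1) (hp : 1 < p) (hδp : 1 / p < δ) :
    ∃ c C C' : ℝ, 0 < c ∧ 0 < C ∧ 0 < C' ∧
      ∀ f : ℝ → E, ContinuousOn f (Set.Icc 0 T) →
        ENNReal.ofReal c * VNorm f δ p 0 T ≤ tildeVNorm f δ p 0 T ∧
        tildeVNorm f δ p 0 T ≤ ENNReal.ofReal C * nikHatNorm f δ p 0 T ∧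
        ENNReal.ofReal C * nikHatNorm f δ p 0 T ≤ ENNReal.ofReal C' * VNorm f δ p 0 T := by
  have hp0 : 0 < p := by linarith
  have hp' : 0 ≤ 1 / p := by positivity
  have hγ : 0 < δ - 1 / p := by linarith
  set K := embConst (δ - 1 / p) with hK
  have hK0 : 0 < K.toReal := ENNReal.toReal_pos embConst_ne_zero (embConst_ne_top hγ)
  refine ⟨1, K.toReal, K.toReal, one_pos, hK0, hK0, fun f hf => ⟨?_, ?_, ?_⟩⟩
  · rw [ENNReal.ofReal_one, one_mul]
    refine ENNReal.rpow_le_rpow ?_ hp'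
    refine iSup_mono fun n => iSup_mono fun u => iSup_mono fun hu => ?_
    refine Finset.sum_le_sum fun i hi => ?_
    gcongr
    exact edist_le_qVar f (by positivity) (hu.2.2 i (Finset.mem_range.1 hi))
  · rw [ENNReal.ofReal_toReal (embConst_ne_top hγ)]
    have h := partSup_le_mul (s := 0) (t := T) (K := K ^ p)
      (φ := fun a b => qVar f (1 / δ) a b ^ p / ENNReal.ofReal (b - a) ^ (δ * p - 1))
      (ψ := fun u v => nikNorm f δ p u v ^ p) fun a b ha hab hb =>
        qVar_rpow_div_le (hf.mono (Set.Icc_subset_Icc ha hb)) hδ hp hδp hab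
    refine (ENNReal.rpow_le_rpow h hp').trans (le_of_eq ?_)
    rw [ENNReal.mul_rpow_of_nonneg _ _ hp', ← ENNReal.rpow_mul, mul_one_div_cancel hp0.ne',
      ENNReal.rpow_one]
    rfl
  · gcongr
    refine ENNReal.rpow_le_rpow ?_ hp'
    have h := partSup_le_mul (s := 0) (t := T) (K := 1) (φ := fun u v => nikNorm f δ p u v ^ p)
      (ψ := rieszTerm f δ p) fun a b _ _ _ => by
        rw [one_mul]; exact nikNorm_rpow_le f hp
    rw [one_mul] at h
    exact h
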